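/- arXiv:math/0208219 — 2 statements merged into one kernel-verified Lean document; each statement's English description precedes it below -/
import Mathlib

section
/- Let S_{v_1} and S_{v_2} be nonempty strata with l(v_1) = l(v_2). Then S_{v_1} is contained in the closure of S_{v_2} in ℝ^n if and only if v_1 is obtained from v_2 by an operation of type A, i.e. if and only if there is a partition of the list v_2 into consecutive nonempty blocks such that v_1 is the list of the sums of these blocks. -/
open Polynomial

/-- The monic polynomial `P_a(x) = x^n + a_1 x^{n-1} + … + a_n`. -/
noncomputable def Ppoly (n : ℕ) (a : Fin n → ℝ) : Polynomial ℝ :=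
  X ^ n + ∑ i : Fin n, C (a i) * X ^ (n - 1 - (i : ℕ))

/-- The multiplicity vector of `P_a`: the multiplicities of the distinct real
roots of `P_a`, listed in increasing order of the roots. -/
noncomputable def MV (n : ℕ) (a : Fin n → ℝ) : List ℕ :=
  ((Ppoly n a).roots.toFinset.sort (· ≤ ·)).map fun x => (Ppoly n a).rootMultiplicity x

/-- The stratum of `ℝ^n` associated with a multiplicity vector `v`. -/
def Stratum (n : ℕ) (v : List ℕ) : Set (Fin n → ℝ) := {a | MV n a = v}

/-- `OpA w w'` : the list `w'` is obtained from `w` by an operation of type A,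
i.e. by partitioning `w` into consecutive nonempty blocks and replacing each
block by the sum of its entries. -/
def OpA (w w' : List ℕ) : Prop :=
  ∃ B : List (List ℕ), (∀ b ∈ B, b ≠ []) ∧ B.flatten = w ∧ w' = B.map List.sum

/-!
Let `v = [m_1, …, m_q]` consist of positive integers. A multiset `s` of reals can be written as
`m_1` copies of `x_1`, …, `m_q` copies of `x_q` with `x_1 ≤ … ≤ x_q` exactly when the
multiplicity vector of `s` arises from `v` by an operation of type A: the blocks are the groups of
coinciding `x_j`.

If the real roots of `P_a` are written in this way, replacing `x_j` by `x_j + ε j` and keeping the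
factor without real roots gives polynomials in `S_v` that tend to `P_a` as `ε` decreases to `0`.
Conversely, if polynomials in `S_v` tend to `P_a`, their real roots stay bounded, so along a
subsequence they converge to some `y_1 ≤ … ≤ y_q`, and the product of the `(X - y_j) ^ m_j` divides
`P_a`. When `P_a` has exactly `l(v)` real roots, this product accounts for all of them.
-/

open Filter Topology

section OpA

variable {m : ℕ} {v w : List ℕ}

lemma opA_refl (v : List ℕ) : OpA v v :=
  ⟨v.map fun m => [m], by simp, by induction v <;> simp_all, by simp [Function.comp_def]⟩

lemma OpA.pos (h : OpA v w) (hv : ∀ m ∈ v, 0 < m) : ∀ m ∈ w, 0 < m := by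
  obtain ⟨B, hB, rfl, rfl⟩ := h
  simp only [List.mem_map, forall_exists_index, and_imp, forall_apply_eq_imp_iff₂]
  intro b hb
  obtain ⟨c, hc⟩ := List.exists_mem_of_ne_nil b (hB b hb)
  exact (hv c (List.mem_flatten_of_mem hb hc)).trans_le (List.le_sum_of_mem hc)

lemma opA_nil_iff : OpA [] w ↔ w = [] := by
  refine ⟨?_, fun h => h ▸ opA_refl []⟩
  rintro ⟨B, hB, hflat, rfl⟩
  rw [List.flatten_eq_nil_iff] at hflat
  rw [List.map_eq_nil_iff, List.eq_nil_iff_forall_not_mem]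
  exact fun b hb => hB b hb (hflat b hb)

lemma opA_cons_iff :
    OpA (m :: v) w ↔ (∃ w', w = m :: w' ∧ OpA v w') ∨
      ∃ k w', w = (m + k) :: w' ∧ OpA v (k :: w') := by
  constructor
  · rintro ⟨_ | ⟨_ | ⟨m', b⟩, B⟩, hB, hflat, rfl⟩
    · simp at hflat
    · simp at hB
    · simp only [List.flatten_cons, List.cons_append, List.cons.injEq] at hflat
      obtain ⟨rfl, rfl⟩ := hflat
      rw [List.forall_mem_cons] at hB
      rcases eq_or_ne b [] with rfl | hb
      · exact .inl ⟨B.map List.sum, by simp, B, hB.2, by simp, rfl⟩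
      · exact .inr ⟨b.sum, B.map List.sum, by simp, b :: B,
          List.forall_mem_cons.2 ⟨hb, hB.2⟩, by simp, by simp⟩
  · rintro (⟨w', rfl, B, hB, rfl, rfl⟩ | ⟨k, w', rfl, B, hB, rfl, hw⟩)
    · exact ⟨[m] :: B, by simpa using hB, by simp, by simp⟩
    · obtain ⟨b, B', rfl, rfl, rfl⟩ := List.map_eq_cons_iff.1 hw.symm
      exact ⟨(m :: b) :: B', by simp_all, by simp, by simp⟩

end OpA

section MultiplicityVector

variable {α : Type*} [LinearOrder α] {m : ℕ} {z : α} {s : Multiset α}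

/-- The multiplicities of the distinct elements of `s`, listed in increasing order of the elements.
Applied to the roots of `P_a`, this is the multiplicity vector `MV`. -/
def multiplicityVector (s : Multiset α) : List ℕ :=
  s.toFinset.sort.map s.count

lemma multiplicityVector_eq_nil : multiplicityVector s = [] ↔ s = 0 := by
  rw [multiplicityVector, List.map_eq_nil_iff, ← List.length_eq_zero_iff, Finset.length_sort,
    Finset.card_eq_zero, Multiset.toFinset_eq_empty]

lemma sum_multiplicityVector (s : Multiset α) : (multiplicityVector s).sum = s.card := by
  rw [← Multiset.toFinset_sum_count_eq, Finset.sum, ← Finset.sort_eq s.toFinset (· ≤ ·),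
    Multiset.map_coe, Multiset.sum_coe, multiplicityVector]

lemma multiplicityVector_nsmul_singleton_add (hm : 0 < m) (hz : ∀ b ∈ s, z < b) :
    multiplicityVector (m • {z} + s) = m :: multiplicityVector s := by
  have hzs : z ∉ s := fun h => (hz z h).false
  have htoFinset : (m • {z} + s).toFinset = insert z s.toFinset := by
    ext b
    simp [hm.ne']
  rw [multiplicityVector, htoFinset, Finset.sort_insert (· ≤ ·)
    (fun b hb => (hz b (Multiset.mem_toFinset.1 hb)).le) (by simpa using hzs), List.map_cons,
    multiplicityVector]
  congr 1
  · simp [Multiset.count_eq_zero_of_notMem hzs]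
  · refine List.map_congr_left fun b hb => ?_
    have hbz : b ≠ z := (hz b (by simpa using hb)).ne'
    simp [hbz]

lemma eq_count_nsmul_singleton_add_filter_lt (hz : ∀ b ∈ s, z ≤ b) :
    s = s.count z • {z} + s.filter (z < ·) := by
  have hfilter : s.filter (z < ·) = s.filter (¬ · = z) :=
    Multiset.filter_congr fun b hb => by rw [(hz b hb).lt_iff_ne, ne_comm]
  conv_lhs => rw [← Multiset.filter_add_not (· = z) s]
  rw [hfilter, Multiset.filter_eq', Multiset.nsmul_singleton]

lemma multiplicityVector_eq_count_cons (hzs : z ∈ s) (hz : ∀ b ∈ s, z ≤ b) :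
    multiplicityVector s = s.count z :: multiplicityVector (s.filter (z < ·)) := by
  conv_lhs => rw [eq_count_nsmul_singleton_add_filter_lt hz]
  exact multiplicityVector_nsmul_singleton_add (Multiset.count_pos.2 hzs)
    fun b hb => (Multiset.mem_filter.1 hb).2

end MultiplicityVector

section BlockIndices

variable {α : Type*} {m : ℕ} {t v : List ℕ}

/-- The multiset of indices of `v` in which the index `j` is repeated `v_j` times, so that
`(blockIndices v).map x` consists of `v_j` copies of `x_j` for each `j`. -/
def blockIndices (v : List ℕ) : Multiset (Fin v.length) :=
  ∑ j, v.get j • {j}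

lemma card_blockIndices (v : List ℕ) : (blockIndices v).card = v.sum := by
  simp [blockIndices, Multiset.card_sum]

lemma mem_blockIndices (hv : ∀ m ∈ v, 0 < m) (j : Fin v.length) : j ∈ blockIndices v := by
  rw [blockIndices, Multiset.mem_sum]
  exact ⟨j, Finset.mem_univ j, Multiset.mem_nsmul.2 ⟨(hv _ (v.get_mem j)).ne', by simp⟩⟩

lemma map_blockIndices_cons (x : Fin (t.length + 1) → α) :
    (blockIndices (m :: t)).map x = m • {x 0} + (blockIndices t).map (x ∘ Fin.succ) := by
  have hmap (u : List ℕ) (y : Fin u.length → α) :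
      (blockIndices u).map y = ∑ j, u.get j • {y j} := by
    rw [blockIndices, ← Multiset.coe_mapAddMonoidHom, map_sum]
    simp [map_nsmul]
  rw [hmap t, hmap (m :: t) x]
  exact Fin.sum_univ_succ (n := t.length) _

variable [LinearOrder α] {s : Multiset α}

lemma multiplicityVector_map_blockIndices (hv : ∀ m ∈ v, 0 < m) {x : Fin v.length → α}
    (hx : StrictMono x) : multiplicityVector ((blockIndices v).map x) = v := by
  induction v with
  | nil => simp [multiplicityVector, blockIndices]
  | cons m t ih =>
    rw [List.forall_mem_cons] at hv
    rw [map_blockIndices_cons, multiplicityVector_nsmul_singleton_add hv.1]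
    · rw [ih hv.2 (hx.comp Fin.strictMono_succ)]
    · simp only [Multiset.mem_map, forall_exists_index, and_imp, forall_apply_eq_imp_iff₂]
      exact fun j _ => hx (Fin.succ_pos j)

lemma opA_multiplicityVector_map_blockIndices (hv : ∀ m ∈ v, 0 < m) {x : Fin v.length → α}
    (hx : Monotone x) : OpA v (multiplicityVector ((blockIndices v).map x)) := by
  induction v with
  | nil => simpa [multiplicityVector, blockIndices] using opA_refl []
  | cons m t ih =>
    rw [List.forall_mem_cons] at hv
    rw [map_blockIndices_cons, opA_cons_iff]
    have htail := ih hv.2 (hx.comp Fin.strictMono_succ.monotone)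
    set z := x 0
    have hz : ∀ b ∈ (blockIndices t).map (x ∘ Fin.succ), z ≤ b := by
      simp only [Multiset.mem_map, forall_exists_index, and_imp, forall_apply_eq_imp_iff₂]
      exact fun j _ => hx (Fin.zero_le _)
    generalize (blockIndices t).map (x ∘ Fin.succ) = s at htail hz ⊢
    by_cases hzs : z ∈ s
    · refine .inr ⟨s.count z, multiplicityVector (s.filter (z < ·)), ?_, ?_⟩
      · conv_lhs => rw [eq_count_nsmul_singleton_add_filter_lt hz, ← add_assoc, ← add_nsmul]
        exact multiplicityVector_nsmul_singleton_add (by omega)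
          fun b hb => (Multiset.mem_filter.1 hb).2
      · rwa [← multiplicityVector_eq_count_cons hzs hz]
    · have hlt : ∀ b ∈ s, z < b := fun b hb => (hz b hb).lt_of_ne (by rintro rfl; exact hzs hb)
      exact .inl ⟨_, multiplicityVector_nsmul_singleton_add hv.1 hlt, htail⟩

lemma exists_eq_nsmul_singleton_add_of_opA_cons (ht : ∀ k ∈ t, 0 < k)
    (h : OpA (m :: t) (multiplicityVector s)) :
    ∃ z s', s = m • {z} + s' ∧ (∀ b ∈ s', z ≤ b) ∧ OpA t (multiplicityVector s') := by
  have hs : s.toFinset.Nonempty := by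
    rw [Multiset.toFinset_nonempty, ne_eq, ← multiplicityVector_eq_nil]
    intro hnil
    simp [hnil, opA_cons_iff] at h
  obtain ⟨z, hzs, hz⟩ := s.toFinset.exists_min_image id hs
  simp only [Multiset.mem_toFinset, id] at hzs hz
  have hsplit := eq_count_nsmul_singleton_add_filter_lt hz
  have hlt : ∀ b ∈ s.filter (z < ·), z < b := fun b hb => (Multiset.mem_filter.1 hb).2
  rw [multiplicityVector_eq_count_cons hzs hz, opA_cons_iff] at h
  simp only [List.cons.injEq] at h
  rcases h with ⟨_, ⟨hcount, rfl⟩, hrest⟩ | ⟨k, _, ⟨hcount, rfl⟩, hrest⟩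
  · exact ⟨z, _, hcount ▸ hsplit, fun b hb => (hlt b hb).le, hrest⟩
  · have hk : 0 < k := hrest.pos ht k List.mem_cons_self
    refine ⟨z, k • {z} + s.filter (z < ·), ?_, fun b hb => ?_, ?_⟩
    · rw [← add_assoc, ← add_nsmul, ← hcount]
      exact hsplit
    · rcases Multiset.mem_add.1 hb with hb | hb
      · exact (Multiset.mem_singleton.1 (Multiset.mem_of_mem_nsmul hb)).ge
      · exact (hlt b hb).le
    · rwa [multiplicityVector_nsmul_singleton_add hk hlt]

lemma monotone_finCons {β : Type*} [Preorder β] {q : ℕ} {z : β} {x : Fin q → β}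
    (hz : ∀ j, z ≤ x j) (hx : Monotone x) : Monotone (Fin.cons z x : Fin (q + 1) → β) := by
  intro i j hij
  cases i using Fin.cases with
  | zero => exact Fin.cases le_rfl hz j
  | succ i =>
    obtain ⟨j, rfl⟩ := Fin.exists_succ_eq.2 ((Fin.succ_pos i).trans_le hij).ne'
    exact hx (Fin.succ_le_succ_iff.1 hij)

lemma exists_monotone_of_opA_multiplicityVector (hv : ∀ m ∈ v, 0 < m)
    (h : OpA v (multiplicityVector s)) :
    ∃ x : Fin v.length → α, Monotone x ∧ s = (blockIndices v).map x := by
  induction v generalizing s with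
  | nil =>
    rw [opA_nil_iff, multiplicityVector_eq_nil] at h
    exact ⟨Fin.elim0, fun i => i.elim0, by simp [h, blockIndices]⟩
  | cons m t ih =>
    rw [List.forall_mem_cons] at hv
    obtain ⟨z, s', rfl, hz, h'⟩ := exists_eq_nsmul_singleton_add_of_opA_cons hv.2 h
    obtain ⟨x, hx, rfl⟩ := ih hv.2 h'
    have hzx (j : Fin t.length) : z ≤ x j :=
      hz _ (Multiset.mem_map_of_mem x (mem_blockIndices hv.2 j))
    exact ⟨Fin.cons z x, monotone_finCons hzx hx, (map_blockIndices_cons (Fin.cons z x)).symm⟩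

end BlockIndices

section CoefficientwiseLimits

variable {R : Type*} [CommRing R] [TopologicalSpace R] [IsTopologicalRing R]
  {ι σ : Type*} {l : Filter ι} {p : ι → R[X]} {q : R[X]} {N : ℕ}

lemma tendsto_eval_of_tendsto_coeff {x : ι → R} {y : R} (hpN : ∀ k, (p k).natDegree ≤ N)
    (hqN : q.natDegree ≤ N) (hpq : ∀ i, Tendsto (fun k => (p k).coeff i) l (𝓝 (q.coeff i)))
    (hx : Tendsto x l (𝓝 y)) : Tendsto (fun k => (p k).eval (x k)) l (𝓝 (q.eval y)) := by
  simp only [eval_eq_sum_range' (Nat.lt_succ_of_le hqN),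
    fun k => eval_eq_sum_range' (Nat.lt_succ_of_le (hpN k))]
  exact tendsto_finsetSum _ fun i _ => (hpq i).mul (hx.pow i)

lemma tendsto_coeff_divByMonic_X_sub_C {x : ι → R} {y : R} (hpN : ∀ k, (p k).natDegree ≤ N)
    (hqN : q.natDegree ≤ N) (hpq : ∀ i, Tendsto (fun k => (p k).coeff i) l (𝓝 (q.coeff i)))
    (hx : Tendsto x l (𝓝 y)) (i : ℕ) :
    Tendsto (fun k => (p k /ₘ (X - C (x k))).coeff i) l (𝓝 ((q /ₘ (X - C y)).coeff i)) := by
  have hcoeff {f : R[X]} (hf : f.natDegree ≤ N) (z : R) : (f /ₘ (X - C z)).coeff i =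
      ∑ j ∈ Finset.Icc (i + 1) N, z ^ (j - (i + 1)) * f.coeff j := by
    rw [coeff_divByMonic_X_sub_C]
    refine Finset.sum_subset (Finset.Icc_subset_Icc_right hf) fun j hj hj' => ?_
    rw [coeff_eq_zero_of_natDegree_lt, mul_zero]
    simp only [Finset.mem_Icc] at hj hj'
    omega
  simp only [hcoeff hqN, fun k => hcoeff (hpN k)]
  exact tendsto_finsetSum _ fun j _ => (hx.pow _).mul (hpq j)

lemma prod_X_sub_C_dvd_of_tendsto [T2Space R] [l.NeBot] {J : Multiset σ} {x : ι → σ → R}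
    {y : σ → R} (hpN : ∀ k, (p k).natDegree ≤ N) (hqN : q.natDegree ≤ N)
    (hpq : ∀ i, Tendsto (fun k => (p k).coeff i) l (𝓝 (q.coeff i)))
    (hx : ∀ j, Tendsto (fun k => x k j) l (𝓝 (y j)))
    (hdvd : ∀ k, ((J.map (x k)).map fun z => X - C z).prod ∣ p k) :
    ((J.map y).map fun z => X - C z).prod ∣ q := by
  induction J using Multiset.induction_on generalizing p q with
  | empty => simp
  | cons j J ih =>
    simp only [Multiset.map_cons, Multiset.prod_cons] at hdvd ⊢
    have hroot (k : ι) : (p k).eval (x k j) = 0 :=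
      dvd_iff_isRoot.1 (dvd_of_mul_right_dvd (hdvd k))
    have hroot_lim : q.IsRoot (y j) := by
      have := tendsto_eval_of_tendsto_coeff hpN hqN hpq (hx j)
      simp only [hroot] at this
      exact tendsto_nhds_unique this tendsto_const_nhds
    rw [← mul_divByMonic_eq_iff_isRoot.2 hroot_lim]
    refine mul_dvd_mul_left _ (ih ?_ ?_ (tendsto_coeff_divByMonic_X_sub_C hpN hqN hpq (hx j)) ?_)
    · exact fun k => (natDegree_le_natDegree (degree_divByMonic_le _ _)).trans (hpN k)
    · exact (natDegree_le_natDegree (degree_divByMonic_le _ _)).trans hqN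
    · intro k
      obtain ⟨r, hr⟩ := hdvd k
      rw [hr, mul_assoc, mul_divByMonic_cancel_left _ (monic_X_sub_C _)]
      exact dvd_mul_right _ _

lemma continuous_coeff_prod_X_sub_C_mul {E : Type*} [TopologicalSpace E] (J : Multiset σ)
    {x : E → σ → R} (hx : Continuous x) (q : R[X]) (i : ℕ) :
    Continuous fun e => (((J.map (x e)).map fun z => X - C z).prod * q).coeff i := by
  induction J using Multiset.induction_on generalizing i with
  | empty => simpa using continuous_const
  | cons j J ih =>
    simp only [Multiset.map_cons, Multiset.prod_cons, mul_assoc, sub_mul, coeff_sub, coeff_C_mul]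
    refine Continuous.sub ?_ (((continuous_apply j).comp hx).mul (ih i))
    cases i with
    | zero => simpa using continuous_const
    | succ i => simpa only [coeff_X_mul] using ih i

end CoefficientwiseLimits

section Ppoly

variable {n : ℕ}

lemma degree_sum_C_mul_X_pow_reflect_lt {R : Type*} [Semiring R] (a : Fin n → R) :
    (∑ i : Fin n, C (a i) * X ^ (n - 1 - (i : ℕ))).degree < (n : WithBot ℕ) := by
  refine (degree_sum_le _ _).trans_lt ((Finset.sup_lt_iff (WithBot.bot_lt_coe n)).2 fun i _ => ?_)
  have hlt : n - 1 - (i : ℕ) < n := by omega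
  exact (degree_C_mul_X_pow_le _ _).trans_lt (WithBot.coe_lt_coe.2 hlt)

lemma monic_Ppoly (a : Fin n → ℝ) : (Ppoly n a).Monic :=
  monic_X_pow_add (degree_sum_C_mul_X_pow_reflect_lt a)

lemma natDegree_Ppoly (a : Fin n → ℝ) : (Ppoly n a).natDegree = n := by
  refine natDegree_eq_of_degree_eq_some ?_
  rw [Ppoly, degree_add_eq_left_of_degree_lt] <;> rw [degree_X_pow]
  exact degree_sum_C_mul_X_pow_reflect_lt a

/-- The coefficients of `p` below degree `n`, from degree `n - 1` down to degree `0`, so that a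
monic `p` of degree `n` is `P_a` for `a = coeffVector n p`. -/
def coeffVector (n : ℕ) (p : ℝ[X]) : Fin n → ℝ :=
  fun i => p.coeff (n - 1 - i)

lemma coeffVector_Ppoly (a : Fin n → ℝ) : coeffVector n (Ppoly n a) = a := by
  funext i
  simp only [coeffVector, Ppoly, coeff_add, finsetSum_coeff, coeff_C_mul, coeff_X_pow]
  rw [if_neg (by omega), zero_add, Finset.sum_eq_single i]
  · simp
  · intro j _ hji
    rw [if_neg (by omega), mul_zero]
  · simp

lemma Ppoly_coeffVector {p : ℝ[X]} (hp : p.Monic) (hdeg : p.natDegree = n) :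
    Ppoly n (coeffVector n p) = p := by
  conv_rhs => rw [hp.as_sum, hdeg]
  rw [Ppoly]
  congr 1
  exact (Fin.sum_univ_eq_sum_range (fun i => C (p.coeff (n - 1 - i)) * X ^ (n - 1 - i)) n).trans
    (Finset.sum_range_reflect (fun i => C (p.coeff i) * X ^ i) n)

lemma continuous_coeff_Ppoly (k : ℕ) : Continuous fun a : Fin n → ℝ => (Ppoly n a).coeff k := by
  simp only [Ppoly, coeff_add, finsetSum_coeff, coeff_C_mul]
  fun_prop

lemma norm_lt_of_mem_roots_Ppoly {a : Fin n → ℝ} {x : ℝ} (hx : x ∈ (Ppoly n a).roots) :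
    ‖x‖ < ‖a‖ + 1 := by
  have hcoeff {i : ℕ} (hi : i < n) : (Ppoly n a).coeff i = a ⟨n - 1 - i, by omega⟩ := by
    conv_rhs => rw [← coeffVector_Ppoly a]
    simp only [coeffVector]
    congr 1
    omega
  have hbound : cauchyBound (Ppoly n a) ≤ ‖a‖₊ + 1 := by
    rw [cauchyBound, (monic_Ppoly a).leadingCoeff, natDegree_Ppoly, nnnorm_one, div_one]
    gcongr
    refine Finset.sup_le fun i hi => ?_
    rw [hcoeff (Finset.mem_range.1 hi)]
    exact nnnorm_le_pi_nnnorm a _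
  have hlt : ‖x‖₊ < cauchyBound (Ppoly n a) :=
    (isRoot_of_mem_roots hx).norm_lt_cauchyBound (monic_Ppoly a).ne_zero
  exact_mod_cast hlt.trans_le hbound

lemma MV_eq_multiplicityVector_roots (a : Fin n → ℝ) :
    MV n a = multiplicityVector (Ppoly n a).roots := by
  simp [MV, multiplicityVector]

end Ppoly

section Closure

variable {n : ℕ} {v : List ℕ} {a : Fin n → ℝ}

lemma exists_monotone_roots_eq_of_mem_stratum (hv : ∀ m ∈ v, 0 < m) (ha : a ∈ Stratum n v) :
    ∃ x : Fin v.length → ℝ, Monotone x ∧ (Ppoly n a).roots = (blockIndices v).map x := by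
  refine exists_monotone_of_opA_multiplicityVector hv ?_
  rw [← MV_eq_multiplicityVector_roots, show MV n a = v from ha]
  exact opA_refl v

lemma exists_monotone_le_roots_of_mem_closure_stratum (hv : ∀ m ∈ v, 0 < m)
    (ha : a ∈ closure (Stratum n v)) :
    ∃ y : Fin v.length → ℝ, Monotone y ∧ (blockIndices v).map y ≤ (Ppoly n a).roots := by
  obtain ⟨u, hu, hlim⟩ := mem_closure_iff_seq_limit.1 ha
  choose x hx hroots using fun k => exists_monotone_roots_eq_of_mem_stratum hv (hu k)
  have hbdd : Bornology.IsBounded (Set.range x) := by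
    obtain ⟨M, hM⟩ := hlim.norm.bddAbove_range
    refine isBounded_iff_forall_norm_le.2 ⟨|M| + 1, ?_⟩
    rintro _ ⟨k, rfl⟩
    refine (pi_norm_le_iff_of_nonneg (by positivity)).2 fun j => ?_
    have hroot : x k j ∈ (Ppoly n (u k)).roots :=
      hroots k ▸ Multiset.mem_map_of_mem _ (mem_blockIndices hv j)
    calc ‖x k j‖ ≤ ‖u k‖ + 1 := (norm_lt_of_mem_roots_Ppoly hroot).le
      _ ≤ |M| + 1 := by gcongr; exact (hM ⟨k, rfl⟩).trans (le_abs_self M)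
  obtain ⟨y, -, φ, hφ, hy⟩ := tendsto_subseq_of_bounded hbdd fun k => Set.mem_range_self k
  have hyj := tendsto_pi_nhds.1 hy
  refine ⟨y, fun i j hij => le_of_tendsto_of_tendsto' (hyj i) (hyj j) fun k => hx _ hij, ?_⟩
  rw [← Multiset.prod_X_sub_C_dvd_iff_le_roots (monic_Ppoly a).ne_zero]
  refine prod_X_sub_C_dvd_of_tendsto (p := fun k => Ppoly n (u (φ k)))
    (fun k => (natDegree_Ppoly _).le) (natDegree_Ppoly a).le (fun i => ?_) hyj fun k => ?_
  · exact ((continuous_coeff_Ppoly i).tendsto a).comp (hlim.comp hφ.tendsto_atTop)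
  · exact hroots (φ k) ▸ prod_multiset_X_sub_C_dvd _

lemma coeffVector_prod_X_sub_C_mul_mem_stratum (hv : ∀ m ∈ v, 0 < m) {x : Fin v.length → ℝ}
    (hx : StrictMono x) {Q : ℝ[X]} (hQ : Q.Monic) (hQroots : Q.roots = 0)
    (hdeg : v.sum + Q.natDegree = n) :
    coeffVector n ((((blockIndices v).map x).map fun z => X - C z).prod * Q) ∈ Stratum n v := by
  have hprod : (((blockIndices v).map x).map fun z => X - C z).prod.Monic :=
    monic_multisetProd_X_sub_C _
  change MV n _ = v
  rw [MV_eq_multiplicityVector_roots, Ppoly_coeffVector (hprod.mul hQ),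
    roots_mul (hprod.mul hQ).ne_zero, hQroots, add_zero, roots_multiset_prod_X_sub_C,
    multiplicityVector_map_blockIndices hv hx]
  rw [hprod.natDegree_mul hQ, natDegree_multiset_prod_X_sub_C_eq_card, Multiset.card_map,
    card_blockIndices, hdeg]

lemma mem_closure_stratum_of_roots_eq (hv : ∀ m ∈ v, 0 < m) {y : Fin v.length → ℝ}
    (hy : Monotone y) (hroots : (Ppoly n a).roots = (blockIndices v).map y) :
    a ∈ closure (Stratum n v) := by
  obtain ⟨Q, hfactor, hdeg, hQroots⟩ := exists_prod_multiset_X_sub_C_mul (Ppoly n a)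
  have hQ : Q.Monic := (monic_multisetProd_X_sub_C _).of_mul_monic_left (hfactor ▸ monic_Ppoly a)
  rw [hroots, Multiset.card_map, card_blockIndices, natDegree_Ppoly] at hdeg
  let x (ε : ℝ) (j : Fin v.length) : ℝ := y j + ε * (j : ℕ)
  let b (ε : ℝ) : Fin n → ℝ :=
    coeffVector n ((((blockIndices v).map (x ε)).map fun z => X - C z).prod * Q)
  have hx {ε : ℝ} (hε : 0 < ε) : StrictMono (x ε) :=
    hy.add_strictMono fun i j hij => by gcongr; exact hij
  have hb : Continuous b :=
    continuous_pi fun i => continuous_coeff_prod_X_sub_C_mul _ (by fun_prop) Q _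
  have hb_zero : b 0 = a := by
    simp only [b, x, zero_mul, add_zero]
    rw [← hroots, hfactor, coeffVector_Ppoly]
  have hlim : Tendsto b (𝓝[>] 0) (𝓝 a) := hb_zero ▸ hb.continuousWithinAt
  refine mem_closure_of_tendsto hlim ?_
  filter_upwards [self_mem_nhdsWithin] with ε hε
  exact coeffVector_prod_X_sub_C_mul_mem_stratum hv (hx hε) hQ hQroots hdeg

lemma mem_closure_stratum_iff_opA (hv : ∀ m ∈ v, 0 < m) (hsum : (MV n a).sum = v.sum) :
    a ∈ closure (Stratum n v) ↔ OpA v (MV n a) := by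
  rw [MV_eq_multiplicityVector_roots] at hsum ⊢
  constructor
  · intro ha
    obtain ⟨y, hy, hle⟩ := exists_monotone_le_roots_of_mem_closure_stratum hv ha
    have hcard : (Ppoly n a).roots.card ≤ ((blockIndices v).map y).card := by
      rw [Multiset.card_map, card_blockIndices, ← hsum, sum_multiplicityVector]
    rw [← Multiset.eq_of_le_of_card_le hle hcard]
    exact opA_multiplicityVector_map_blockIndices hv hy
  · intro h
    obtain ⟨y, hy, hroots⟩ := exists_monotone_of_opA_multiplicityVector hv h
    exact mem_closure_stratum_of_roots_eq hv hy hroots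

end Closure

/-- Let `S_{v₁}`, `S_{v₂}` be nonempty strata with `l(v₁) = l(v₂)`. Then `S_{v₁}`
is contained in the closure of `S_{v₂}` iff `v₁` is obtained from `v₂` by an
operation of type A. -/
theorem adjacency_same_length (n : ℕ) (hn : 1 ≤ n) (v₁ v₂ : List ℕ)
    (hv₁ : ∀ m ∈ v₁, 0 < m) (hv₂ : ∀ m ∈ v₂, 0 < m)
    (hne₁ : (Stratum n v₁).Nonempty) (hne₂ : (Stratum n v₂).Nonempty)
    (hlen : v₁.sum = v₂.sum) :
    Stratum n v₁ ⊆ closure (Stratum n v₂) ↔ OpA v₂ v₁ := by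
  have hmem {a : Fin n → ℝ} (ha : a ∈ Stratum n v₁) :
      a ∈ closure (Stratum n v₂) ↔ OpA v₂ v₁ := by
    have hMV : MV n a = v₁ := ha
    rw [mem_closure_stratum_iff_opA hv₂ (hMV ▸ hlen), hMV]
  obtain ⟨a, ha⟩ := hne₁
  exact ⟨fun hsub => (hmem ha).1 (hsub ha), fun hA b hb => (hmem hb).2 hA⟩
end

section
/- Let S_{v_1} and S_{v_2} be nonempty strata with l(v_1) = l(v_2) + 2k for some integer k ≥ 1. Then S_{v_1} is contained in the closure of S_{v_2} in ℝ^n if and only if v_1 is obtained from v_2 either by one operation of type A followed by k operations of type B, or by k operations of type B alone. -/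
open Polynomial

/-- `OpB w w'` : the list `w'` is obtained from `w` by an operation of type B,
i.e. either by inserting a new component equal to `2` at an arbitrary position,
or by increasing one component by `2`. -/
def OpB (w w' : List ℕ) : Prop :=
  (∃ l₁ l₂, w = l₁ ++ l₂ ∧ w' = l₁ ++ 2 :: l₂) ∨
  (∃ l₁ c l₂, w = l₁ ++ c :: l₂ ∧ w' = l₁ ++ (c + 2) :: l₂)

/-- `OpBIter k w w'` : `w'` is obtained from `w` by exactly `k` operations of
type B. -/
def OpBIter : ℕ → List ℕ → List ℕ → Prop
  | 0, w, w' => w' = w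
  | k + 1, w, w' => ∃ u, OpB w u ∧ OpBIter k u w'

/-!
The closure of `S_v` consists of the `a` for which `P_a = ∏ i, (X - y i) ^ v i * R` with
`y 1 ≤ ⋯ ≤ y q` and `R ≥ 0` on `ℝ`: such factorizations are limits of those with `y` strictly
increasing and `R > 0`, and they are stable under limits because, by Mignotte's bound, the
coefficients of a monic factor of `P_a` are bounded in terms of `a`. Since the roots of a
nonnegative polynomial have even multiplicity, such a factorization exists precisely when `MV a`
arises from `v` by an operation of type A, which records the coincidences among the `y i`, followed
by operations of type B, one for each pair of equal real roots of `R`.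
-/

section Combinatorics

lemma opA_nil_left_iff {u : List ℕ} : OpA [] u ↔ u = [] := by
  constructor
  · rintro ⟨B, hB, hflat, rfl⟩
    rw [List.flatten_eq_nil_iff] at hflat
    rw [List.eq_nil_iff_forall_not_mem.2 fun b hb => hB b hb (hflat b hb), List.map_nil]
  · rintro rfl
    exact ⟨[], by simp, rfl, rfl⟩

lemma opA_cons_iff_s7 {d : ℕ} {w u : List ℕ} :
    OpA (d :: w) u ↔
      ∃ u', OpA w u' ∧ (u = d :: u' ∨ ∃ c t, u' = c :: t ∧ u = (d + c) :: t) := by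
  constructor
  · rintro ⟨_ | ⟨_ | ⟨e, b⟩, B⟩, hB, hflat, rfl⟩
    · simp at hflat
    · exact absurd rfl (hB [] (by simp))
    · obtain ⟨rfl, rfl⟩ : e = d ∧ b ++ B.flatten = w := by simpa using hflat
      have hB' : ∀ b ∈ B, b ≠ [] := fun b hb => hB b (by simp [hb])
      rcases eq_or_ne b [] with rfl | hb
      · exact ⟨B.map List.sum, ⟨B, hB', rfl, rfl⟩, .inl (by simp)⟩
      · exact ⟨b.sum :: B.map List.sum, ⟨b :: B, by simpa [hb] using hB', rfl, rfl⟩,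
          .inr ⟨_, _, rfl, by simp⟩⟩
  · rintro ⟨_, ⟨B, hB, rfl, rfl⟩, rfl | ⟨c, t, hBt, rfl⟩⟩
    · exact ⟨[d] :: B, by simpa using hB, rfl, by simp⟩
    · obtain ⟨b, B, rfl, rfl, rfl⟩ := List.map_eq_cons_iff.1 hBt
      exact ⟨(d :: b) :: B, by simpa using fun a ha => hB a (by simp [ha]), rfl, by simp⟩

lemma OpA.refl (w : List ℕ) : OpA w w := by
  induction w with
  | nil => exact opA_nil_left_iff.2 rfl
  | cons d w ih => exact opA_cons_iff_s7.2 ⟨w, ih, .inl rfl⟩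

lemma OpA.sum_eq {w u : List ℕ} (h : OpA w u) : u.sum = w.sum := by
  obtain ⟨B, -, rfl, rfl⟩ := h
  exact List.sum_flatten.symm

lemma OpA.forall_pos {w u : List ℕ} (h : OpA w u) (hw : ∀ m ∈ w, 0 < m) : ∀ m ∈ u, 0 < m := by
  obtain ⟨B, hB, rfl, rfl⟩ := h
  simp only [List.forall_mem_map]
  intro b hb
  obtain ⟨c, hc⟩ := List.exists_mem_of_ne_nil b (hB b hb)
  exact (hw c (List.mem_flatten_of_mem hb hc)).trans_le (List.single_le_sum (by simp) c hc)

lemma opB_cons_right_iff {a : ℕ} {w u : List ℕ} :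
    OpB w (a :: u) ↔
      (a = 2 ∧ w = u) ∨ (∃ c, a = c + 2 ∧ w = c :: u) ∨ ∃ w', w = a :: w' ∧ OpB w' u := by
  constructor
  · rintro (⟨_ | ⟨b, l₁⟩, l₂, rfl, h⟩ | ⟨_ | ⟨b, l₁⟩, c, l₂, rfl, h⟩) <;>
      obtain ⟨rfl, rfl⟩ := List.cons_eq_cons.1 h
    · exact .inl ⟨rfl, rfl⟩
    · exact .inr (.inr ⟨_, rfl, .inl ⟨l₁, l₂, rfl, rfl⟩⟩)
    · exact .inr (.inl ⟨c, rfl, rfl⟩)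
    · exact .inr (.inr ⟨_, rfl, .inr ⟨l₁, c, l₂, rfl, rfl⟩⟩)
  · rintro (⟨rfl, rfl⟩ | ⟨c, rfl, rfl⟩ | ⟨w', rfl, ⟨l₁, l₂, rfl, rfl⟩ | ⟨l₁, c, l₂, rfl, rfl⟩⟩)
    · exact .inl ⟨[], w, rfl, rfl⟩
    · exact .inr ⟨[], c, u, rfl, rfl⟩
    · exact .inl ⟨a :: l₁, l₂, rfl, rfl⟩
    · exact .inr ⟨a :: l₁, c, l₂, rfl, rfl⟩

lemma not_opB_nil {w : List ℕ} : ¬ OpB w [] := by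
  rintro (⟨l₁, l₂, -, h⟩ | ⟨l₁, c, l₂, -, h⟩) <;> simp at h

lemma OpB.sum_eq {w u : List ℕ} (h : OpB w u) : u.sum = w.sum + 2 := by
  rcases h with ⟨l₁, l₂, rfl, rfl⟩ | ⟨l₁, c, l₂, rfl, rfl⟩ <;>
    simp only [List.sum_append, List.sum_cons] <;> ring

lemma OpB.forall_pos {w u : List ℕ} (h : OpB w u) (hw : ∀ m ∈ w, 0 < m) : ∀ m ∈ u, 0 < m := by
  rcases h with ⟨l₁, l₂, rfl, rfl⟩ | ⟨l₁, c, l₂, rfl, rfl⟩ <;>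
    simp only [List.forall_mem_append, List.forall_mem_cons] at hw ⊢
  · exact ⟨hw.1, two_pos, hw.2⟩
  · exact ⟨hw.1, by positivity, hw.2.2⟩

lemma OpBIter.sum_eq {k : ℕ} {w u : List ℕ} (h : OpBIter k w u) : u.sum = w.sum + 2 * k := by
  induction k generalizing w with
  | zero => rw [show u = w from h, mul_zero, add_zero]
  | succ k ih =>
    obtain ⟨w', hB, hIter⟩ := h
    rw [ih hIter, hB.sum_eq]
    ring

lemma exists_opA_opBIter_iff {k : ℕ} {v w : List ℕ} (hlen : w.sum = v.sum + 2 * k) :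
    (∃ j u, OpA v u ∧ OpBIter j u w) ↔ (∃ u, OpA v u ∧ OpBIter k u w) ∨ OpBIter k v w := by
  constructor
  · rintro ⟨j, u, hA, hB⟩
    obtain rfl : j = k := by have := hA.sum_eq; have := hB.sum_eq; omega
    exact .inl ⟨u, hA, hB⟩
  · rintro (⟨u, hA, hB⟩ | hB)
    · exact ⟨k, u, hA, hB⟩
    · exact ⟨k, v, .refl v, hB⟩

end Combinatorics

section WeightedMultiset

variable {α : Type*}

/-- The multiset in which `y i` is counted with weight `v i`. The points `y i` may coincide, which
for monotone `y` models the merging of consecutive blocks by an operation of type A. -/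
def weightedMultiset (v : List ℕ) (y : Fin v.length → α) : Multiset α := ∑ i, v.get i • {y i}

lemma weightedMultiset_cons {d : ℕ} {w : List ℕ} (y : Fin (d :: w).length → α) :
    weightedMultiset (d :: w) y = d • {y 0} + weightedMultiset w (Fin.tail y) :=
  Fin.sum_univ_succ (n := w.length) _

lemma card_weightedMultiset (v : List ℕ) (y : Fin v.length → α) :
    (weightedMultiset v y).card = v.sum := by
  simp [weightedMultiset, Fin.sum_univ_getElem]

lemma prod_map_weightedMultiset {M : Type*} [CommMonoid M] (v : List ℕ) (y : Fin v.length → α)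
    (f : α → M) : ((weightedMultiset v y).map f).prod = ∏ i, f (y i) ^ v.get i := by
  rw [weightedMultiset, ← Multiset.coe_mapAddMonoidHom, map_sum, Multiset.prod_sum]
  simp only [Multiset.coe_mapAddMonoidHom, Multiset.map_nsmul, Multiset.prod_nsmul,
    Multiset.map_singleton, Multiset.prod_singleton]

lemma mem_weightedMultiset {v : List ℕ} {y : Fin v.length → α} {x : α} (hv : ∀ m ∈ v, 0 < m) :
    x ∈ weightedMultiset v y ↔ ∃ i, y i = x := by
  simp only [weightedMultiset, Multiset.mem_sum, Multiset.mem_nsmul, Multiset.mem_singleton,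
    Finset.mem_univ, true_and, eq_comm (a := x)]
  exact exists_congr fun i => and_iff_right (hv _ (v.get_mem i)).ne'

end WeightedMultiset

section MultVec

variable {α : Type*} [LinearOrder α]

/-- The multiplicity vector of a finite multiset in a linear order: the multiplicities of its
distinct elements, listed in increasing order of the elements. For the real roots of `P_a` this is
`MV`. -/
def multVec (s : Multiset α) : List ℕ := (s.toFinset.sort (· ≤ ·)).map s.count

lemma multVec_eq_nil_iff {s : Multiset α} : multVec s = [] ↔ s = 0 := by
  simp [multVec, ← List.length_eq_zero_iff]

lemma sum_multVec (s : Multiset α) : (multVec s).sum = s.card := by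
  rw [multVec, ← List.sum_toFinset _ (Finset.sort_nodup _ _), Finset.sort_toFinset,
    Multiset.toFinset_sum_count_eq]

lemma multVec_nsmul_singleton_add {d : ℕ} {x : α} {s : Multiset α} (hd : d ≠ 0)
    (hx : ∀ y ∈ s, x < y) : multVec (d • {x} + s) = d :: multVec s := by
  have hxs : x ∉ s := fun h => (hx x h).false
  have htoFinset : (d • {x} + s).toFinset = insert x s.toFinset := by
    ext y
    simp [hd]
  rw [multVec, htoFinset, Finset.sort_insert (· ≤ ·) (fun y hy => (hx y (by simpa using hy)).le)
    (by simpa using hxs), List.map_cons]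
  congr 1
  · simp [hxs]
  · refine List.map_congr_left fun y hy => ?_
    have hxy : y ≠ x := (hx y (by simpa using hy)).ne'
    simp [hxy]

lemma eq_zero_or_exists_nsmul_singleton_add (s : Multiset α) :
    s = 0 ∨ ∃ d x t, d ≠ 0 ∧ (∀ y ∈ t, x < y) ∧ s = d • {x} + t := by
  rcases eq_or_ne s 0 with rfl | hs
  · exact .inl rfl
  obtain ⟨x, hxs, hmin⟩ := s.toFinset.exists_min_image id
    (Multiset.toFinset_nonempty.2 hs)
  refine .inr ⟨s.count x, x, s.filter (x < ·), ?_, by simp, ?_⟩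
  · simpa [Multiset.count_eq_zero] using hxs
  · rw [Multiset.nsmul_singleton, ← Multiset.filter_eq']
    nth_rw 1 [← Multiset.filter_add_not (· = x) s]
    congr 1
    refine Multiset.filter_congr fun y hy => ?_
    have : x ≤ y := hmin y (by simpa using hy)
    exact ⟨fun h => this.lt_of_ne' h, fun h => h.ne'⟩

lemma exists_eq_nsmul_singleton_add_of_multVec_eq_cons {c : ℕ} {u : List ℕ} {s : Multiset α}
    (h : multVec s = c :: u) :
    ∃ x t, c ≠ 0 ∧ (∀ y ∈ t, x < y) ∧ multVec t = u ∧ s = c • {x} + t := by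
  obtain rfl | ⟨d, x, t, hd, hx, rfl⟩ := eq_zero_or_exists_nsmul_singleton_add s
  · simp [multVec_eq_nil_iff.2 rfl] at h
  · rw [multVec_nsmul_singleton_add hd hx, List.cons_eq_cons] at h
    obtain ⟨rfl, rfl⟩ := h
    exact ⟨x, t, hd, hx, rfl, rfl⟩

lemma forall_mem_multVec_pos {s : Multiset α} : ∀ m ∈ multVec s, 0 < m := by
  simp [multVec, Multiset.count_pos]

lemma opB_multVec_add_two_nsmul (s : Multiset α) (x : α) :
    OpB (multVec s) (multVec (s + 2 • {x})) := by
  induction hv : multVec s generalizing s with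
  | nil =>
    obtain rfl := multVec_eq_nil_iff.1 hv
    rw [add_comm, multVec_nsmul_singleton_add two_ne_zero (by simp), hv]
    exact opB_cons_right_iff.2 (.inl ⟨rfl, rfl⟩)
  | cons d u ih =>
    obtain ⟨z, t, hd, hz, rfl, rfl⟩ := exists_eq_nsmul_singleton_add_of_multVec_eq_cons hv
    rcases lt_trichotomy x z with hxz | rfl | hzx
    · have hx : ∀ y ∈ d • {z} + t, x < y := fun y hy => by
        rcases Multiset.mem_add.1 hy with hy | hy
        · rwa [Multiset.mem_singleton.1 (Multiset.mem_of_mem_nsmul hy)]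
        · exact hxz.trans (hz y hy)
      rw [add_comm, multVec_nsmul_singleton_add two_ne_zero hx, hv]
      exact opB_cons_right_iff.2 (.inl ⟨rfl, rfl⟩)
    · rw [add_right_comm, ← add_nsmul, multVec_nsmul_singleton_add (by omega) hz]
      exact opB_cons_right_iff.2 (.inr (.inl ⟨d, rfl, rfl⟩))
    · have hz' : ∀ y ∈ t + 2 • {x}, z < y := fun y hy => by
        rcases Multiset.mem_add.1 hy with hy | hy
        · exact hz y hy
        · rwa [Multiset.mem_singleton.1 (Multiset.mem_of_mem_nsmul hy)]
      rw [add_assoc, multVec_nsmul_singleton_add hd hz']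
      exact opB_cons_right_iff.2 (.inr (.inr ⟨_, rfl, ih t rfl⟩))

lemma exists_eq_add_two_nsmul_of_opB {w : List ℕ} {s : Multiset α} (hw : ∀ m ∈ w, 0 < m)
    (h : OpB w (multVec s)) : ∃ t x, multVec t = w ∧ s = t + 2 • {x} := by
  induction hv : multVec s generalizing s w with
  | nil => exact absurd (hv ▸ h) not_opB_nil
  | cons a u ih =>
    rw [hv, opB_cons_right_iff] at h
    obtain ⟨x, t, ha, hx, rfl, rfl⟩ := exists_eq_nsmul_singleton_add_of_multVec_eq_cons hv
    rcases h with ⟨rfl, rfl⟩ | ⟨c, rfl, rfl⟩ | ⟨w', rfl, hB⟩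
    · exact ⟨t, x, rfl, add_comm _ _⟩
    · have hc : c ≠ 0 := (hw c (by simp)).ne'
      refine ⟨c • {x} + t, x, multVec_nsmul_singleton_add hc hx, ?_⟩
      rw [add_nsmul, add_right_comm]
    · obtain ⟨t', z, rfl, rfl⟩ := ih (fun m hm => hw m (by simp [hm])) hB rfl
      refine ⟨a • {x} + t', z, multVec_nsmul_singleton_add ha fun y hy => ?_, ?_⟩
      · exact hx y (Multiset.mem_add.2 (.inl hy))
      · rw [add_assoc]

lemma opBIter_multVec_iff {k : ℕ} {w : List ℕ} {s : Multiset α} (hw : ∀ m ∈ w, 0 < m) :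
    OpBIter k w (multVec s) ↔ ∃ t r, multVec t = w ∧ r.card = k ∧ s = t + 2 • r := by
  induction k generalizing w with
  | zero =>
    change multVec s = w ↔ _
    constructor
    · exact fun h => ⟨s, 0, h, rfl, by simp⟩
    · rintro ⟨t, r, rfl, hr, rfl⟩
      rw [Multiset.card_eq_zero.1 hr, nsmul_zero, add_zero]
  | succ k ih =>
    constructor
    · rintro ⟨u, hB, hIter⟩
      obtain ⟨t, r, rfl, rfl, rfl⟩ := (ih (hB.forall_pos hw)).1 hIter
      obtain ⟨t, x, rfl, rfl⟩ := exists_eq_add_two_nsmul_of_opB hw hB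
      exact ⟨t, x ::ₘ r, rfl, by simp, by rw [← Multiset.singleton_add, nsmul_add, add_assoc]⟩
    · rintro ⟨t, r, rfl, hr, rfl⟩
      obtain ⟨x, hx⟩ := Multiset.card_pos_iff_exists_mem.1 (hr ▸ k.succ_pos : 0 < r.card)
      obtain ⟨r, rfl⟩ := Multiset.exists_cons_of_mem hx
      refine ⟨_, opB_multVec_add_two_nsmul t x,
        (ih forall_mem_multVec_pos).2 ⟨_, r, rfl, by simpa using hr, ?_⟩⟩
      rw [← Multiset.singleton_add, nsmul_add, add_assoc]

lemma opA_cons_multVec_iff {d : ℕ} {w : List ℕ} {s : Multiset α} (hd : 0 < d)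
    (hw : ∀ m ∈ w, 0 < m) :
    OpA (d :: w) (multVec s) ↔
      ∃ x t, (∀ y ∈ t, x ≤ y) ∧ OpA w (multVec t) ∧ s = d • {x} + t := by
  rw [opA_cons_iff_s7]
  constructor
  · rintro ⟨u, hA, hu | ⟨c, u, rfl, hu⟩⟩ <;>
      obtain ⟨x, t, -, hx, rfl, rfl⟩ := exists_eq_nsmul_singleton_add_of_multVec_eq_cons hu
    · exact ⟨x, t, fun y hy => (hx y hy).le, hA, rfl⟩
    · have hc : c ≠ 0 := (hA.forall_pos hw c (by simp)).ne'
      refine ⟨x, c • {x} + t, fun y hy => ?_, ?_, by rw [add_nsmul, add_assoc]⟩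
      · rcases Multiset.mem_add.1 hy with hy | hy
        · rw [Multiset.mem_singleton.1 (Multiset.mem_of_mem_nsmul hy)]
        · exact (hx y hy).le
      · rwa [multVec_nsmul_singleton_add hc hx]
  · rintro ⟨x, t, hx, hA, rfl⟩
    refine ⟨_, hA, ?_⟩
    by_cases hxt : x ∈ t
    · obtain rfl | ⟨c, z, t, hc, hz, rfl⟩ := eq_zero_or_exists_nsmul_singleton_add t
      · simp at hxt
      obtain rfl : x = z := by
        refine (hx z (by simp [Multiset.mem_nsmul, hc])).antisymm ?_
        rcases Multiset.mem_add.1 hxt with hxz | hxt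
        · exact (Multiset.mem_singleton.1 (Multiset.mem_of_mem_nsmul hxz)).ge
        · exact (hz x hxt).le
      refine .inr ⟨c, multVec t, multVec_nsmul_singleton_add hc hz, ?_⟩
      rw [← add_assoc, ← add_nsmul, multVec_nsmul_singleton_add (by omega) hz]
    · exact .inl (multVec_nsmul_singleton_add hd.ne' fun y hy =>
        (hx y hy).lt_of_ne (ne_of_mem_of_not_mem hy hxt).symm)

lemma multVec_weightedMultiset {v : List ℕ} {y : Fin v.length → α} (hv : ∀ m ∈ v, 0 < m)
    (hy : StrictMono y) : multVec (weightedMultiset v y) = v := by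
  induction v with
  | nil => exact multVec_eq_nil_iff.2 rfl
  | cons d w ih =>
    have hw : ∀ m ∈ w, 0 < m := fun m hm => hv m (by simp [hm])
    rw [weightedMultiset_cons, multVec_nsmul_singleton_add (hv d (by simp)).ne',
      ih (y := Fin.tail y) hw (hy.comp Fin.strictMono_succ)]
    intro z hz
    obtain ⟨i, rfl⟩ := (mem_weightedMultiset hw).1 hz
    exact hy (Fin.succ_pos i)

lemma opA_multVec_iff {v : List ℕ} {s : Multiset α} (hv : ∀ m ∈ v, 0 < m) :
    OpA v (multVec s) ↔ ∃ y, Monotone y ∧ s = weightedMultiset v y := by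
  induction v generalizing s with
  | nil =>
    rw [opA_nil_left_iff, multVec_eq_nil_iff]
    exact ⟨fun hs => ⟨_, Subsingleton.monotone Fin.elim0, hs⟩, fun ⟨_, _, hs⟩ => hs⟩
  | cons d w ih =>
    have hw : ∀ m ∈ w, 0 < m := fun m hm => hv m (by simp [hm])
    rw [opA_cons_multVec_iff (hv d (by simp)) hw]
    constructor
    · rintro ⟨x, t, hx, hA, rfl⟩
      obtain ⟨y, hy, rfl⟩ := (ih hw).1 hA
      refine ⟨Fin.cons x y, ?_, by rw [weightedMultiset_cons, Fin.cons_zero, Fin.tail_cons]⟩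
      have hxy (i) : x ≤ y i := hx _ ((mem_weightedMultiset hw).2 ⟨i, rfl⟩)
      exact Fin.cases (Fin.cases (fun _ => le_rfl) fun i _ => hxy i)
        (fun i => Fin.cases (fun h => absurd h (Fin.succ_pos i).not_ge)
          fun j h => hy (Fin.succ_le_succ_iff.1 h))
    · rintro ⟨y, hy, rfl⟩
      refine ⟨y 0, weightedMultiset w (Fin.tail y), fun z hz => ?_,
        (ih hw).2 ⟨Fin.tail y, hy.comp Fin.strictMono_succ.monotone, rfl⟩, weightedMultiset_cons y⟩
      obtain ⟨i, rfl⟩ := (mem_weightedMultiset hw).1 hz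
      exact hy (Fin.zero_le _)

lemma exists_opA_opBIter_multVec_iff {v : List ℕ} {s : Multiset α} (hv : ∀ m ∈ v, 0 < m) :
    (∃ k u, OpA v u ∧ OpBIter k u (multVec s)) ↔
      ∃ y t, Monotone y ∧ s = weightedMultiset v y + 2 • t := by
  constructor
  · rintro ⟨k, u, hA, hB⟩
    obtain ⟨r, t, rfl, -, rfl⟩ := (opBIter_multVec_iff (hA.forall_pos hv)).1 hB
    obtain ⟨y, hy, rfl⟩ := (opA_multVec_iff hv).1 hA
    exact ⟨y, t, hy, rfl⟩
  · rintro ⟨y, t, hy, rfl⟩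
    exact ⟨t.card, _, (opA_multVec_iff hv).2 ⟨y, hy, rfl⟩,
      (opBIter_multVec_iff forall_mem_multVec_pos).2 ⟨_, t, rfl, rfl, rfl⟩⟩

end MultVec

section MonicPolynomials

/-- The coefficients of `p` below degree `n`, listed in decreasing order of degree; on monic
polynomials of degree `n` this is the inverse of `Ppoly n`. -/
def coeffVec (n : ℕ) (p : ℝ[X]) : Fin n → ℝ := fun i => p.coeff i.rev

lemma ppoly_eq_X_pow_add_sum_rev (n : ℕ) (a : Fin n → ℝ) :
    Ppoly n a = X ^ n + ∑ i : Fin n, C (a i.rev) * X ^ (i : ℕ) := by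
  rw [Ppoly, ← Equiv.sum_comp Fin.revPerm]
  congr! with i
  rw [Fin.revPerm_apply, Fin.val_rev]
  omega

lemma monic_ppoly (n : ℕ) (a : Fin n → ℝ) : (Ppoly n a).Monic :=
  ppoly_eq_X_pow_add_sum_rev n a ▸ monic_X_pow_add (degree_sum_fin_lt _)

@[simp]
lemma natDegree_ppoly (n : ℕ) (a : Fin n → ℝ) : (Ppoly n a).natDegree = n := by
  rw [ppoly_eq_X_pow_add_sum_rev, natDegree_add_eq_left_of_degree_lt, natDegree_X_pow]
  simpa using degree_sum_fin_lt _

@[simp]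
lemma coeffVec_ppoly (n : ℕ) (a : Fin n → ℝ) : coeffVec n (Ppoly n a) = a := by
  ext i
  rw [coeffVec, ppoly_eq_X_pow_add_sum_rev, coeff_add, coeff_X_pow, if_neg i.rev.is_lt.ne,
    zero_add, finsetSum_coeff]
  simp only [coeff_C_mul, coeff_X_pow, Fin.val_inj, mul_ite, mul_one, mul_zero,
    Finset.sum_ite_eq, Finset.mem_univ, if_true, Fin.rev_rev]

lemma ppoly_coeffVec {n : ℕ} {p : ℝ[X]} (hp : p.Monic) (hn : p.natDegree = n) :
    Ppoly n (coeffVec n p) = p := by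
  subst hn
  rw [ppoly_eq_X_pow_add_sum_rev]
  conv_rhs => rw [hp.as_sum, Finset.sum_range]
  simp [coeffVec]

lemma mv_eq_multVec_roots (n : ℕ) (a : Fin n → ℝ) : MV n a = multVec (Ppoly n a).roots := by
  simp [MV, multVec]

lemma continuous_coeff_ppoly (n j : ℕ) : Continuous fun a => (Ppoly n a).coeff j := by
  simp only [Ppoly, coeff_add, finsetSum_coeff, coeff_C_mul]
  fun_prop

lemma continuous_eval_ppoly (n : ℕ) (x : ℝ) : Continuous fun a => (Ppoly n a).eval x := by
  simp only [Ppoly, eval_add, eval_finsetSum, eval_C_mul, eval_pow, eval_X]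
  fun_prop

end MonicPolynomials

section NonnegativePolynomials

variable {p : ℝ[X]}

lemma eval_pos_of_monic_of_forall_eval_ne_zero (hp : p.Monic) (h : ∀ x, p.eval x ≠ 0) (x : ℝ) :
    0 < p.eval x := by
  rcases eq_or_ne p.natDegree 0 with hdeg | hdeg
  · simp [hp.natDegree_eq_zero.1 hdeg]
  by_contra! hx
  have htop := p.tendsto_atTop_of_leadingCoeff_nonneg
    (natDegree_pos_iff_degree_pos.1 hdeg.bot_lt) (by simp [hp.leadingCoeff])
  obtain ⟨z, hz⟩ := mem_range_of_exists_le_of_exists_ge p.continuous ⟨x, hx⟩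
    (htop.eventually_ge_atTop 0).exists
  exact h z hz

lemma even_rootMultiplicity_of_eval_nonneg (hp : p ≠ 0) (h : ∀ x, 0 ≤ p.eval x) (x : ℝ) :
    Even (p.rootMultiplicity x) := by
  -- Otherwise `(X - x) * g`, with `g` as below, has a minimum at `x`, where its derivative is
  -- `g x ≠ 0`.
  by_contra hodd
  obtain ⟨j, hj⟩ := Nat.not_even_iff_odd.1 hodd
  obtain ⟨g, hpg, hg⟩ := p.exists_eq_pow_rootMultiplicity_mul_and_not_dvd hp x
  rw [dvd_iff_isRoot] at hg
  have hmin : ∀ y, 0 ≤ ((X - C x) * g).eval y := by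
    intro y
    rcases eq_or_ne y x with rfl | hyx
    · simp
    have hsq : 0 < ((y - x) ^ j) ^ 2 := by have := sub_ne_zero.2 hyx; positivity
    refine nonneg_of_mul_nonneg_right ((h y).trans_eq ?_) hsq
    rw [hpg, hj]
    simp only [eval_mul, eval_pow, eval_sub, eval_X, eval_C]
    ring
  have hderiv : deriv (fun y => ((X - C x) * g).eval y) x = 0 :=
    IsLocalMin.deriv_eq_zero (.of_forall fun y => by simpa using hmin y)
  rw [Polynomial.deriv] at hderiv
  exact hg (by simpa using hderiv)

lemma forall_eval_nonneg_iff_exists_roots_eq_two_nsmul (hp : p.Monic) :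
    (∀ x, 0 ≤ p.eval x) ↔ ∃ t, p.roots = 2 • t := by
  constructor
  · intro h
    refine Multiset.exists_smul_of_dvd_count _ fun x _ => ?_
    rw [count_roots]
    exact (even_rootMultiplicity_of_eval_nonneg hp.ne_zero h x).two_dvd
  · rintro ⟨t, ht⟩ x
    obtain ⟨q, hpq, -, hq⟩ := exists_prod_multiset_X_sub_C_mul p
    have hqmonic : q.Monic :=
      (monic_multiset_prod_of_monic _ _ fun x _ => monic_X_sub_C x).of_mul_monic_left (hpq ▸ hp)
    have hqpos := eval_pos_of_monic_of_forall_eval_ne_zero hqmonic fun y hy => by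
      simpa [hq] using (mem_roots hqmonic.ne_zero).2 hy
    rw [← hpq, ht, Multiset.map_nsmul, Multiset.prod_nsmul, eval_mul, eval_pow]
    exact mul_nonneg (sq_nonneg _) (hqpos x).le

end NonnegativePolynomials

section CoefficientBounds

open Finset

lemma abs_coeff_le_of_dvd {p q : ℝ[X]} (hp : p.Monic) (hq : q.Monic) (hpq : p ∣ q) (j : ℕ) :
    |p.coeff j| ≤ 2 ^ q.natDegree * ∑ i ∈ range (q.natDegree + 1), |q.coeff i| := by
  obtain ⟨r, rfl⟩ := hpq
  have hr : 1 ≤ (r.map (algebraMap ℝ ℂ)).mahlerMeasure :=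
    one_le_mahlerMeasure_of_one_le_norm_leadingCoeff
      (by simp [(hp.of_mul_monic_left hq).leadingCoeff])
  have hmahler : ((p * r).map (algebraMap ℝ ℂ)).mahlerMeasure ≤
      ∑ i ∈ range ((p * r).natDegree + 1), |(p * r).coeff i| := by
    refine (mahlerMeasure_le_sum_norm_coeff _).trans_eq ?_
    rw [sum_over_range _ (by simp), natDegree_map]
    simp only [coeff_map, norm_algebraMap', Real.norm_eq_abs]
  calc |p.coeff j| = ‖(p.map (algebraMap ℝ ℂ)).coeff j‖ := by simp
    _ ≤ p.natDegree.choose j * ((p * r).map (algebraMap ℝ ℂ)).mahlerMeasure := by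
      simpa using norm_coeff_le_choose_mul_mahlerMeasure_of_one_le_mahlerMeasure j
        (p.map (algebraMap ℝ ℂ)) _ hr
    _ ≤ 2 ^ (p * r).natDegree * ∑ i ∈ range ((p * r).natDegree + 1), |(p * r).coeff i| := by
      have hdeg : p.natDegree ≤ (p * r).natDegree := natDegree_le_of_dvd ⟨r, rfl⟩ hq.ne_zero
      gcongr
      · exact mahlerMeasure_nonneg _
      · exact_mod_cast (Nat.choose_le_two_pow _ _).trans (Nat.pow_le_pow_right two_pos hdeg)

end CoefficientBounds

lemma isProperMap_of_norm_le {E F : Type*} [NormedAddCommGroup E] [ProperSpace E]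
    [TopologicalSpace F] [T2Space F] [WeaklyLocallyCompactSpace F] {f : E → F} {g : F → ℝ}
    (hf : Continuous f) (hg : Continuous g) (h : ∀ x, ‖x‖ ≤ g (f x)) : IsProperMap f := by
  refine isProperMap_iff_isCompact_preimage.2 ⟨hf, fun K hK => ?_⟩
  obtain ⟨C, hC⟩ := hK.exists_bound_of_continuousOn hg.continuousOn
  refine Metric.isCompact_of_isClosed_isBounded (hK.isClosed.preimage hf)
    (isBounded_iff_forall_norm_le.2 ⟨C, fun x hx => ?_⟩)
  exact (h x).trans ((le_abs_self _).trans (hC _ hx))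

section ProdXSubCPow

variable {R : Type*} [CommRing R]

lemma monic_prod_X_sub_C_pow (v : List ℕ) (y : Fin v.length → R) :
    (∏ i, (X - C (y i)) ^ v.get i).Monic :=
  monic_prod_of_monic _ _ fun i _ => (monic_X_sub_C (y i)).pow _

lemma natDegree_prod_X_sub_C_pow [Nontrivial R] (v : List ℕ) (y : Fin v.length → R) :
    (∏ i, (X - C (y i)) ^ v.get i).natDegree = v.sum := by
  rw [← prod_map_weightedMultiset v y fun x => X - C x, natDegree_multiset_prod_X_sub_C_eq_card,
    card_weightedMultiset]

lemma roots_prod_X_sub_C_pow [IsDomain R] (v : List ℕ) (y : Fin v.length → R) :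
    (∏ i, (X - C (y i)) ^ v.get i).roots = weightedMultiset v y := by
  rw [← prod_map_weightedMultiset v y fun x => X - C x, roots_multiset_prod_X_sub_C]

end ProdXSubCPow

section FactorMap

variable {v : List ℕ} {m : ℕ}

/-- The coefficient vector of `∏ i, (X - y i) ^ v i * P_c` as a function of `z = (y, c)`. The
points with `y` monotone and `P_c` nonnegative on `ℝ` parametrize the closure of `S_v`. -/
noncomputable def factorMap (v : List ℕ) (m : ℕ) (z : (Fin v.length → ℝ) × (Fin m → ℝ)) :
    Fin (v.sum + m) → ℝ :=
  coeffVec (v.sum + m) ((∏ i, (X - C (z.1 i)) ^ v.get i) * Ppoly m z.2)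

lemma ppoly_factorMap (z : (Fin v.length → ℝ) × (Fin m → ℝ)) :
    Ppoly (v.sum + m) (factorMap v m z) = (∏ i, (X - C (z.1 i)) ^ v.get i) * Ppoly m z.2 := by
  have hmonic := monic_prod_X_sub_C_pow v z.1
  refine ppoly_coeffVec (hmonic.mul (monic_ppoly m z.2)) ?_
  rw [hmonic.natDegree_mul (monic_ppoly m z.2), natDegree_prod_X_sub_C_pow, natDegree_ppoly]

lemma roots_ppoly_factorMap (z : (Fin v.length → ℝ) × (Fin m → ℝ)) :
    (Ppoly (v.sum + m) (factorMap v m z)).roots =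
      weightedMultiset v z.1 + (Ppoly m z.2).roots := by
  rw [ppoly_factorMap, roots_mul (mul_ne_zero (monic_prod_X_sub_C_pow v z.1).ne_zero
    (monic_ppoly m z.2).ne_zero), roots_prod_X_sub_C_pow]

open scoped PowerSeries.WithPiTopology in
lemma continuous_factorMap (v : List ℕ) (m : ℕ) : Continuous (factorMap v m) := by
  -- `ℝ[X]` carries no topology, so the product is taken in `ℝ⟦X⟧` with the topology of
  -- coefficientwise convergence.
  have hcoe : Continuous fun z : (Fin v.length → ℝ) × (Fin m → ℝ) =>
      (((∏ i, (X - C (z.1 i)) ^ v.get i) * Ppoly m z.2 : ℝ[X]) : PowerSeries ℝ) := by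
    have hC : Continuous (PowerSeries.C (R := ℝ)) := PowerSeries.WithPiTopology.continuous_C
    simp only [Ppoly, ← coeToPowerSeries.ringHom_apply, map_mul, map_prod, map_pow, map_sub,
      map_add, map_sum]
    simp only [coeToPowerSeries.ringHom_apply, coe_C, coe_X]
    fun_prop
  refine continuous_pi fun i => ?_
  simpa only [factorMap, coeffVec, Function.comp_def, coeff_coe] using
    (PowerSeries.WithPiTopology.continuous_coeff ℝ (i.rev : ℕ)).comp hcoe

lemma isProperMap_factorMap (hv : ∀ d ∈ v, 0 < d) : IsProperMap (factorMap v m) := by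
  let bound (b : Fin (v.sum + m) → ℝ) : ℝ :=
    2 ^ (v.sum + m) * ∑ i ∈ Finset.range (v.sum + m + 1), |(Ppoly (v.sum + m) b).coeff i|
  have hbound : Continuous bound :=
    continuous_const.mul (continuous_finsetSum _ fun i _ => (continuous_coeff_ppoly _ i).abs)
  refine isProperMap_of_norm_le (continuous_factorMap v m) hbound fun z => ?_
  have hfactor {p : ℝ[X]} (hp : p.Monic)
      (hdvd : p ∣ Ppoly (v.sum + m) (factorMap v m z)) (j : ℕ) :
      |p.coeff j| ≤ bound (factorMap v m z) := by
    simpa [bound] using abs_coeff_le_of_dvd hp (monic_ppoly _ _) hdvd j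
  rw [ppoly_factorMap] at hfactor
  have hbound_nonneg : 0 ≤ bound (factorMap v m z) := by positivity
  refine max_le ((pi_norm_le_iff_of_nonneg hbound_nonneg).2 fun i => ?_)
    ((pi_norm_le_iff_of_nonneg hbound_nonneg).2 fun i => ?_)
  · have hdvd : X - C (z.1 i) ∣ ∏ i, (X - C (z.1 i)) ^ v.get i :=
      (dvd_pow_self _ (hv _ (v.get_mem i)).ne').trans
        (Finset.dvd_prod_of_mem (fun i => (X - C (z.1 i)) ^ v.get i) (Finset.mem_univ i))
    simpa using hfactor (monic_X_sub_C _) (hdvd.mul_right _) 0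
  · have hcoeff : z.2 i = (Ppoly m z.2).coeff i.rev := (congrFun (coeffVec_ppoly m z.2) i).symm
    exact hcoeff ▸ hfactor (monic_ppoly m z.2) (dvd_mul_left _ _) _

lemma mem_image_factorMap_iff {a : Fin (v.sum + m) → ℝ} :
    a ∈ factorMap v m '' ({y | Monotone y} ×ˢ {c | ∀ x, 0 ≤ (Ppoly m c).eval x}) ↔
      ∃ y t, Monotone y ∧ (Ppoly (v.sum + m) a).roots = weightedMultiset v y + 2 • t := by
  constructor
  · rintro ⟨⟨y, c⟩, ⟨hy, hc⟩, rfl⟩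
    obtain ⟨t, ht⟩ := (forall_eval_nonneg_iff_exists_roots_eq_two_nsmul (monic_ppoly m c)).1 hc
    exact ⟨y, t, hy, by rw [roots_ppoly_factorMap, ht]⟩
  · rintro ⟨y, t, hy, hroots⟩
    obtain ⟨r, hr⟩ := (Multiset.prod_X_sub_C_dvd_iff_le_roots (monic_ppoly _ a).ne_zero
      (weightedMultiset v y)).2 (hroots ▸ Multiset.le_add_right _ _)
    rw [prod_map_weightedMultiset] at hr
    have hmonic := monic_prod_X_sub_C_pow v y
    have hr_monic : r.Monic := hmonic.of_mul_monic_left (hr ▸ monic_ppoly _ a)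
    have hr_deg : r.natDegree = m := by
      have := congrArg natDegree hr
      rw [natDegree_ppoly, hmonic.natDegree_mul hr_monic, natDegree_prod_X_sub_C_pow] at this
      omega
    have ha : factorMap v m (y, coeffVec m r) = a := by
      rw [factorMap, ppoly_coeffVec hr_monic hr_deg, ← hr, coeffVec_ppoly]
    have hroots' : (Ppoly m (coeffVec m r)).roots = 2 • t := by
      rwa [← ha, roots_ppoly_factorMap, add_right_inj] at hroots
    have hnonneg :=
      (forall_eval_nonneg_iff_exists_roots_eq_two_nsmul (monic_ppoly m _)).2 ⟨t, hroots'⟩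
    exact ⟨(y, coeffVec m r), ⟨hy, hnonneg⟩, ha⟩

lemma isClosed_setOf_forall_eval_ppoly_nonneg (m : ℕ) :
    IsClosed {c | ∀ x, 0 ≤ (Ppoly m c).eval x} := by
  simp only [Set.ofPred_forall]
  exact isClosed_iInter fun x => isClosed_le continuous_const (continuous_eval_ppoly m x)

lemma isClosed_image_factorMap (hv : ∀ d ∈ v, 0 < d) :
    IsClosed (factorMap v m '' ({y | Monotone y} ×ˢ {c | ∀ x, 0 ≤ (Ppoly m c).eval x})) :=
  (isProperMap_factorMap hv).isClosedMap _
    (isClosed_monotone.prod (isClosed_setOf_forall_eval_ppoly_nonneg m))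

end FactorMap

section Density

open Topology

lemma setOf_monotone_subset_closure_setOf_strictMono (q : ℕ) :
    {y : Fin q → ℝ | Monotone y} ⊆ closure {y | StrictMono y} := by
  intro y hy
  have hlim : Filter.Tendsto (fun e : ℝ => fun i => y i + e * (i : ℕ)) (𝓝[>] 0) (𝓝 y) := by
    refine (Continuous.tendsto' ?_ _ _ (by simp)).mono_left nhdsWithin_le_nhds
    fun_prop
  refine mem_closure_of_tendsto hlim (eventually_mem_nhdsWithin.mono fun e he => ?_)
  refine hy.add_strictMono fun i j hij => mul_lt_mul_of_pos_left ?_ he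
  exact_mod_cast hij

lemma setOf_eval_nonneg_subset_closure_setOf_eval_pos (m : ℕ) :
    {c | ∀ x, 0 ≤ (Ppoly m c).eval x} ⊆ closure {c | ∀ x, 0 < (Ppoly m c).eval x} := by
  intro c hc
  rcases Nat.eq_zero_or_pos m with rfl | hm
  · exact subset_closure fun x => by simp [Ppoly]
  have hlim : Filter.Tendsto (fun e => coeffVec m (Ppoly m c + C e)) (𝓝[>] 0) (𝓝 c) := by
    refine (Continuous.tendsto' ?_ _ _ (by simp)).mono_left nhdsWithin_le_nhds
    refine continuous_pi fun i => ?_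
    simp only [coeffVec, coeff_add, coeff_C]
    split_ifs <;> fun_prop
  refine mem_closure_of_tendsto hlim (eventually_mem_nhdsWithin.mono fun e he x => ?_)
  have hdeg : (C e).degree < (Ppoly m c).degree :=
    degree_C_le.trans_lt (natDegree_pos_iff_degree_pos.1 (by simpa using hm))
  rw [ppoly_coeffVec ((monic_ppoly m c).add_of_left hdeg) (by simp), eval_add, eval_C]
  exact add_pos_of_nonneg_of_pos (hc x) he

end Density

section Stratum

variable {v : List ℕ}

lemma factorMap_mem_stratum {m : ℕ} (hv : ∀ d ∈ v, 0 < d) {y : Fin v.length → ℝ} {c : Fin m → ℝ}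
    (hy : StrictMono y) (hc : ∀ x, 0 < (Ppoly m c).eval x) :
    factorMap v m (y, c) ∈ Stratum (v.sum + m) v := by
  have hroots : (Ppoly m c).roots = 0 :=
    Multiset.eq_zero_of_forall_notMem fun x hx => (hc x).ne' (isRoot_of_mem_roots hx)
  rw [Stratum, Set.mem_ofPred, mv_eq_multVec_roots, roots_ppoly_factorMap, hroots, add_zero,
    multVec_weightedMultiset hv hy]

lemma image_factorMap_subset_closure_stratum {m : ℕ} (hv : ∀ d ∈ v, 0 < d) :
    factorMap v m '' ({y | Monotone y} ×ˢ {c | ∀ x, 0 ≤ (Ppoly m c).eval x}) ⊆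
      closure (Stratum (v.sum + m) v) := calc
  _ ⊆ factorMap v m '' closure ({y | StrictMono y} ×ˢ {c | ∀ x, 0 < (Ppoly m c).eval x}) := by
    rw [closure_prod_eq]
    exact Set.image_mono (Set.prod_mono (setOf_monotone_subset_closure_setOf_strictMono _)
      (setOf_eval_nonneg_subset_closure_setOf_eval_pos m))
  _ ⊆ closure (factorMap v m '' ({y | StrictMono y} ×ˢ {c | ∀ x, 0 < (Ppoly m c).eval x})) :=
    image_closure_subset_closure_image (continuous_factorMap v m)
  _ ⊆ closure (Stratum (v.sum + m) v) := by
    refine closure_mono ?_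
    rintro _ ⟨⟨y, c⟩, ⟨hy, hc⟩, rfl⟩
    exact factorMap_mem_stratum hv hy hc

lemma stratum_subset_setOf_opA_opBIter (n : ℕ) (v : List ℕ) :
    Stratum n v ⊆ {a | ∃ k u, OpA v u ∧ OpBIter k u (MV n a)} := by
  rintro a rfl
  exact ⟨0, _, .refl _, rfl⟩

lemma sum_le_of_opA_opBIter_mv {n k : ℕ} {u : List ℕ} {a : Fin n → ℝ} (hA : OpA v u)
    (hB : OpBIter k u (MV n a)) : v.sum ≤ n := by
  have hcard : (MV n a).sum ≤ n := by
    rw [mv_eq_multVec_roots, sum_multVec]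
    exact (card_roots' _).trans_eq (natDegree_ppoly n a)
  have := hA.sum_eq
  have := hB.sum_eq
  omega

theorem closure_stratum (n : ℕ) (hv : ∀ d ∈ v, 0 < d) :
    closure (Stratum n v) = {a | ∃ k u, OpA v u ∧ OpBIter k u (MV n a)} := by
  by_cases hn : v.sum ≤ n
  · obtain ⟨m, rfl⟩ := Nat.exists_eq_add_of_le hn
    have himage : {a | ∃ k u, OpA v u ∧ OpBIter k u (MV (v.sum + m) a)} =
        factorMap v m '' ({y | Monotone y} ×ˢ {c | ∀ x, 0 ≤ (Ppoly m c).eval x}) := by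
      ext a
      rw [mem_image_factorMap_iff, Set.mem_ofPred, mv_eq_multVec_roots,
        exists_opA_opBIter_multVec_iff hv]
    refine (closure_minimal (stratum_subset_setOf_opA_opBIter _ v) ?_).antisymm ?_ <;> rw [himage]
    exacts [isClosed_image_factorMap hv, image_factorMap_subset_closure_stratum hv]
  · have hempty : {a | ∃ k u, OpA v u ∧ OpBIter k u (MV n a)} = ∅ :=
      Set.eq_empty_of_forall_notMem fun a ⟨_, _, hA, hB⟩ => hn (sum_le_of_opA_opBIter_mv hA hB)
    have hstratum : Stratum n v = ∅ :=
      Set.subset_eq_empty (stratum_subset_setOf_opA_opBIter n v) hempty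
    rw [hempty, hstratum, closure_empty]

end Stratum

theorem adjacency_different_length_general {n : ℕ} {v₁ v₂ : List ℕ} (hv₂ : ∀ m ∈ v₂, 0 < m)
    (hne₁ : (Stratum n v₁).Nonempty) :
    Stratum n v₁ ⊆ closure (Stratum n v₂) ↔ ∃ k u, OpA v₂ u ∧ OpBIter k u v₁ := by
  rw [closure_stratum n hv₂]
  constructor
  · intro hsub
    obtain ⟨a, rfl⟩ := hne₁
    exact hsub rfl
  · rintro h a rfl
    exact h

/-- Let `S_{v₁}`, `S_{v₂}` be nonempty strata with `l(v₁) = l(v₂) + 2k`,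
`k ≥ 1`. Then `S_{v₁}` is contained in the closure of `S_{v₂}` iff `v₁` is
obtained from `v₂` either by one operation of type A followed by `k` operations
of type B, or by `k` operations of type B alone. -/
theorem adjacency_different_length (n : ℕ) (hn : 1 ≤ n) (v₁ v₂ : List ℕ)
    (hv₁ : ∀ m ∈ v₁, 0 < m) (hv₂ : ∀ m ∈ v₂, 0 < m)
    (hne₁ : (Stratum n v₁).Nonempty) (hne₂ : (Stratum n v₂).Nonempty)
    (k : ℕ) (hk : 1 ≤ k) (hlen : v₁.sum = v₂.sum + 2 * k) :
    Stratum n v₁ ⊆ closure (Stratum n v₂) ↔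
      ((∃ u, OpA v₂ u ∧ OpBIter k u v₁) ∨ OpBIter k v₂ v₁) :=
  (adjacency_different_length_general hv₂ hne₁).trans (exists_opA_opBIter_iff hlen)
end
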